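/- (Proposition on curves, part (ii), torus case.) Let K be an algebraically closed field of characteristic p > 0, let f ∈ K[x, y] be an irreducible polynomial, and let X = {(a, b) ∈ (Kˣ)² : f(a, b) = 0}; assume X is infinite, so that X is an irreducible curve in the torus (Kˣ)². Let Γ be a finitely generated subgroup of (Kˣ)². If the stabilizer Stab(X) = {g ∈ (Kˣ)² : g·X = X} is finite, then X ∩ Γ is a finite union of groupless F-sets in Γ. -/

import Mathlib

/-- `S` is a groupless `F`-set in the subgroup `Γ` of `(Kˣ)²`: a subset of `Γ` of the
form `{α₀ · ∏_{i=1}^r F_q^{k·n_i}(α_i) : n_1, …, n_r ∈ ℕ}` for some `r ≥ 0`, `k ≥ 1`,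
a power `q = p^a` of `p`, and `α₀, …, α_r ∈ (Kˣ)²`, where `F_q : x ↦ x^q` is the
`q`-power Frobenius of the torus. -/
def IsGrouplessFSet₂ {K : Type*} [Field K] (p : ℕ)
    (Γ : Subgroup (Kˣ × Kˣ)) (S : Set (Kˣ × Kˣ)) : Prop :=
  S ⊆ ↑Γ ∧ ∃ (a : ℕ), 1 ≤ a ∧ ∃ (r k : ℕ), 1 ≤ k ∧
    ∃ (α₀ : Kˣ × Kˣ) (α : Fin r → Kˣ × Kˣ),
      S = {g | ∃ n : Fin r → ℕ, g = α₀ * ∏ i : Fin r, (α i) ^ ((p ^ a) ^ (k * n i))}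

section
open IntermediateField
theorem exists_unitHom {F L : Type*} [Field F] [Field L] [Algebra F L] [Algebra.EssFiniteType F L]
    (x : Lˣ) (hx : Transcendental F (x : L)) :
    ∃ v : Lˣ →* Multiplicative ℤ, v x ≠ 1 := by
  obtain ⟨t, hxt, ht⟩ := exists_isTranscendenceBasis_superset (R := F) (s := {(x : L)})
    ((algebraicIndependent_unique_type_iff (ι := ({(x : L)} : Set L))).2 (by simpa using hx))
  have hxt : (x : L) ∈ t := hxt rfl
  let k : IntermediateField F L := IntermediateField.adjoin F (t \ {(x : L)})
  have hxk : Transcendental k (x : L) := by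
    rw [show k = IntermediateField.adjoin F (t \ {(x : L)}) from rfl,
      IntermediateField.transcendental_adjoin_iff]
    have h1 : AlgebraicIndepOn F id (insert (x : L) (t \ {(x : L)})) := by
      rw [Set.insert_sdiff_singleton, Set.insert_eq_of_mem hxt]; exact ht.1
    have := ((AlgebraicIndepOn.insert_iff (by simp)).1 h1).2
    rw [Set.image_id] at this; exact this
  let E := k⟮(x : L)⟯
  have halg : Algebra.IsAlgebraic E L := by
    have h0 := ht.isAlgebraic
    rw [Subtype.range_coe] at h0
    have hle : Algebra.adjoin F t ≤ (E.restrictScalars F).toSubalgebra := by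
      rw [Algebra.adjoin_le_iff]
      intro y hy
      by_cases h : y = x
      · subst h; exact IntermediateField.mem_adjoin_simple_self k _
      · exact E.algebraMap_mem (⟨y, IntermediateField.subset_adjoin F _ ⟨hy, h⟩⟩ : k)
    let _ : Algebra (Algebra.adjoin F t) E := (Subalgebra.inclusion hle).toRingHom.toAlgebra
    have _ : IsScalarTower (Algebra.adjoin F t) E L := IsScalarTower.of_algebraMap_eq (fun _ => rfl)
    exact Algebra.IsAlgebraic.extendScalars (R := Algebra.adjoin F t) (Subalgebra.inclusion_injective hle)
  have hEs : Algebra.EssFiniteType E L := by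
    have h1 : Algebra.EssFiniteType k L := Algebra.EssFiniteType.of_comp F k L
    exact Algebra.EssFiniteType.of_comp k E L
  have hfin : FiniteDimensional E L := by
    obtain ⟨s, hs⟩ := IntermediateField.fg_top E L
    have := IntermediateField.finiteDimensional_adjoin (K := E) (S := (s : Set L)) (fun y _ => (halg.isAlgebraic y).isIntegral)
    rw [hs] at this
    exact Module.Finite.equiv IntermediateField.topEquiv.toLinearEquiv
  let e := (RatFunc.algEquivOfTranscendental (x : L) hxk).symm
  let g : L →* RatFunc k := (e : E →* RatFunc k).comp (Algebra.norm E)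
  have hg : ∀ y : L, y ≠ 0 → g y ≠ 0 := by
    intro y hy
    exact (map_ne_zero_iff e e.injective).2 (Algebra.norm_ne_zero_iff.2 hy)
  refine ⟨⟨⟨fun u => Multiplicative.ofAdd (RatFunc.intDegree (g u)), by simp⟩, ?_⟩, ?_⟩
  · intro u w
    simp only [Units.val_mul, map_mul]
    rw [RatFunc.intDegree_mul (hg _ u.ne_zero) (hg _ w.ne_zero), ofAdd_add]
  · have h1 : g (x : L) = RatFunc.X ^ (Module.finrank E L) := by
      have h := Algebra.norm_algebraMap (R := E) (S := L) (AdjoinSimple.gen k (x : L))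
      change e (Algebra.norm E (x : L)) = _
      change Algebra.norm E (x : L) = _ at h
      rw [h, map_pow]
      congr 1
      exact RatFunc.algEquivOfTranscendental_symm_gen _ _
    have h2 : ∀ n : ℕ, RatFunc.intDegree ((RatFunc.X : RatFunc k) ^ n) = n := by
      intro n
      rw [← RatFunc.algebraMap_X, ← map_pow, RatFunc.intDegree_polynomial]; simp
    simp only [MonoidHom.coe_mk, OneHom.coe_mk, h1, h2]
    intro h
    have h3 := ofAdd_eq_one.1 h
    have : 0 < Module.finrank E L := Module.finrank_pos
    omega

end

theorem finite_int_additive (G : Type*) [CommGroup G] [Group.FG G] : Module.Finite ℤ (Additive G) :=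
  Module.Finite.iff_addGroup_fg.mpr inferInstance

theorem subgroup_fg_of_le {G : Type*} [CommGroup G] {H H' : Subgroup G} (hH' : H'.FG) (h : H ≤ H') :
    H.FG := by
  have : Group.FG H' := (Group.fg_iff_subgroup_fg H').2 hH'
  have := finite_int_additive H'
  let i : Additive H →ₗ[ℤ] Additive H' := (MonoidHom.toAdditive (Subgroup.inclusion h)).toIntLinearMap
  have hi : Function.Injective i := Subgroup.inclusion_injective h
  have hN : IsNoetherian ℤ (Additive H) := isNoetherian_of_injective i hi
  have : AddGroup.FG (Additive H) := Module.Finite.iff_addGroup_fg.mp inferInstance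
  exact (Group.fg_iff_subgroup_fg H).1 (GroupFG.iff_add_fg.2 this)

theorem torsion_finite (G : Type*) [CommGroup G] [Group.FG G] : {x : G | IsOfFinOrder x}.Finite := by
  have h1 : (CommGroup.torsion G).FG :=
    subgroup_fg_of_le (H' := ⊤) (Group.fg_def.1 inferInstance) le_top
  have : Group.FG (CommGroup.torsion G) := (Group.fg_iff_subgroup_fg _).2 h1
  have := CommGroup.finite_of_fg_isMulTorsion (G := CommGroup.torsion G) (fun ⟨x, hx⟩ => Submonoid.isOfFinOrder_coe.1 hx)
  exact Set.toFinite (CommGroup.torsion G : Set G)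

theorem krull_pow {G : Type*} [CommGroup G] [Group.FG G] {p : ℕ} (hp : p.Prime) (x : G)
    (h : ∀ n : ℕ, ∃ y, x = y ^ (p ^ n)) : ∃ k : ℕ, 1 ≤ k ∧ x ^ (p ^ k - 1) = 1 := by
  have := finite_int_additive G
  obtain ⟨⟨r, hr⟩, hrx⟩ := (Ideal.mem_iInf_smul_pow_eq_bot_iff (R := ℤ) (M := Additive G)
    (Ideal.span {(p : ℤ)}) (Additive.ofMul x)).1 (by
      rw [Submodule.mem_iInf]
      intro n
      obtain ⟨y, hy⟩ := h n
      have : Additive.ofMul x = ((p : ℤ) ^ n) • Additive.ofMul y := by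
        rw [hy]; rw [← ofMul_zpow]; norm_cast
      rw [this]
      exact Submodule.smul_mem_smul (Ideal.pow_mem_pow (Ideal.mem_span_singleton_self _) n) trivial)
  rw [Ideal.mem_span_singleton] at hr
  obtain ⟨c, rfl⟩ := hr
  let m : ℕ := (1 - p * c : ℤ).natAbs
  have hx : x ^ m = 1 := by
    have h1 : x ^ (1 - p * c : ℤ) = 1 := by
      have h2 : x ^ (p * c : ℤ) = x := hrx
      rw [zpow_sub, h2, zpow_one, mul_inv_cancel]
    exact pow_natAbs_eq_one.2 h1
  have hcop : Nat.Coprime p m := by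
    rw [Nat.Prime.coprime_iff_not_dvd hp]
    intro hd
    have h3 : (p : ℤ) ∣ 1 - p * c := Int.natCast_dvd.2 hd
    have h4 : (p : ℤ) ∣ 1 := by
      have := dvd_add h3 (dvd_mul_right (p : ℤ) c)
      simpa using this
    have h5 := Int.natCast_dvd_natCast.1 (by exact_mod_cast h4 : ((p : ℕ) : ℤ) ∣ ((1 : ℕ) : ℤ))
    exact hp.one_lt.ne' (Nat.dvd_one.1 h5)
  have hm0 : m ≠ 0 := by
    rintro h0
    rw [h0, Nat.coprime_zero_right] at hcop
    exact hp.one_lt.ne' hcop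
  refine ⟨m.totient, Nat.totient_pos.2 (Nat.pos_of_ne_zero hm0), ?_⟩
  have h6 := Nat.ModEq.pow_totient hcop
  have h7 : m ∣ p ^ m.totient - 1 :=
    (Nat.modEq_iff_dvd' (Nat.one_le_pow _ _ hp.pos)).1 h6.symm
  obtain ⟨d, hd⟩ := h7
  rw [hd, pow_mul, hx, one_pow]

theorem pow_p_injective {K : Type*} [Field K] {p : ℕ} (hp : p.Prime) [CharP K p] (n : ℕ) (x y : K)
    (h : x ^ (p ^ n) = y ^ (p ^ n)) : x = y := by
  have : Fact p.Prime := ⟨hp⟩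
  exact iterateFrobenius_inj K p n (by simpa [iterateFrobenius_def] using h)

theorem units_pow_p_injective {K : Type*} [Field K] {p : ℕ} (hp : p.Prime) [CharP K p] (n : ℕ)
    (x y : Kˣ) (h : x ^ (p ^ n) = y ^ (p ^ n)) : x = y := by
  apply Units.ext
  apply pow_p_injective hp n
  simpa using congrArg Units.val h

/-- A torsion unit is equal to arbitrarily high p-power powers of itself. -/
theorem torsion_pow {K : Type*} [Field K] {p : ℕ} (hp : p.Prime) [CharP K p]
    (x : Kˣ) (hx : IsOfFinOrder x) (n : ℕ) : ∃ m, n ≤ m ∧ x ^ (p ^ m) = x := by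
  have hinj : Function.Injective (fun y : Kˣ => y ^ p) := by
    intro a b h
    exact units_pow_p_injective hp 1 a b (by simpa using h)
  have hcop : Nat.Coprime p (orderOf x) := by
    rw [Nat.Prime.coprime_iff_not_dvd hp]
    rintro ⟨d, hd⟩
    have h1 : x ^ d = 1 := hinj (by
      change (x ^ d) ^ p = 1 ^ p
      rw [one_pow, ← pow_mul, mul_comm, ← hd, pow_orderOf_eq_one])
    have hpos := hx.orderOf_pos
    have hd0 : 0 < d := by
      rcases Nat.eq_zero_or_pos d with h | h
      · subst h; omega
      · exact h
    have h2 := Nat.le_of_dvd hd0 (orderOf_dvd_of_pow_eq_one h1)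
    have := hp.two_le
    nlinarith
  refine ⟨(orderOf x).totient * n, Nat.le_mul_of_pos_left _ (Nat.totient_pos.2 hx.orderOf_pos), ?_⟩
  conv_rhs => rw [← pow_one x]
  rw [pow_eq_pow_iff_modEq]
  have h6 := Nat.ModEq.pow_totient hcop
  have := h6.pow n
  rwa [one_pow, ← pow_mul] at this

theorem sat_fg {L : Type*} [Field L] {p : ℕ} (hp : p.Prime) [CharP L p] [Algebra (ZMod p) L]
    [Algebra.EssFiniteType (ZMod p) L] (A B : Subgroup Lˣ) (hA : A.FG)
    (hAB : ∀ u ∈ B, ∃ n : ℕ, u ^ (p ^ n) ∈ A) : B.FG := by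
  have : Fact p.Prime := ⟨hp⟩
  have : Group.FG A := (Group.fg_iff_subgroup_fg A).2 hA
  have := finite_int_additive A
  -- restriction of homomorphisms
  let iA : Additive A →ₗ[ℤ] Additive Lˣ := (MonoidHom.toAdditive A.subtype).toIntLinearMap
  let iB : Additive B →ₗ[ℤ] Additive Lˣ := (MonoidHom.toAdditive B.subtype).toIntLinearMap
  let res : (Additive Lˣ →ₗ[ℤ] ℤ) →ₗ[ℤ] (Additive A →ₗ[ℤ] ℤ) := LinearMap.lcomp ℤ ℤ iA
  obtain ⟨n, s, hs⟩ := Submodule.fg_iff_exists_fin_generating_family.1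
    (IsNoetherian.noetherian (LinearMap.range res))
  have hs' : ∀ i, ∃ v, res v = s i := fun i => by
    have : s i ∈ LinearMap.range res := hs ▸ Submodule.subset_span ⟨i, rfl⟩
    exact this
  choose v hv using hs'
  have key : ∀ x : Lˣ, x ∈ A → (∀ i, v i (Additive.ofMul x) = 0) → IsOfFinOrder x := by
    intro x hxA hx
    by_contra hfin
    have htr : Transcendental (ZMod p) (x : L) := by
      intro halg
      apply hfin
      have hxint := halg.isIntegral
      have : FiniteDimensional (ZMod p) (IntermediateField.adjoin (ZMod p) {(x : L)}) :=
        IntermediateField.adjoin.finiteDimensional hxint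
      have : Finite (IntermediateField.adjoin (ZMod p) {(x : L)}) := Module.finite_of_finite (ZMod p)
      let y : (IntermediateField.adjoin (ZMod p) {(x : L)})ˣ :=
        Units.mk0 (IntermediateField.AdjoinSimple.gen (ZMod p) (x : L)) (by
          intro h
          have := congrArg Subtype.val h
          exact x.ne_zero this)
      have hy : IsOfFinOrder y := isOfFinOrder_of_finite y
      have := MonoidHom.isOfFinOrder (Units.map (IntermediateField.adjoin (ZMod p) {(x : L)}).val.toMonoidHom) hy
      convert this using 1
      ext; rfl
    obtain ⟨w, hw⟩ := exists_unitHom x htr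
    apply hw
    let w' : Additive Lˣ →ₗ[ℤ] ℤ := (MonoidHom.toAdditiveLeft w).toIntLinearMap
    have hmem : res w' ∈ Submodule.span ℤ (Set.range s) := by
      rw [hs]; exact ⟨w', rfl⟩
    have hall : ∀ g ∈ Submodule.span ℤ (Set.range s), g (Additive.ofMul ⟨x, hxA⟩) = 0 := by
      intro g hg
      induction hg using Submodule.span_induction with
      | mem g hg =>
        obtain ⟨i, rfl⟩ := hg
        rw [← hv i]; exact hx i
      | zero => rfl
      | add a b _ _ ha hb => rw [LinearMap.add_apply, ha, hb, add_zero]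
      | smul c a _ ha => rw [LinearMap.smul_apply, ha, smul_zero]
    exact hall _ hmem
  have key2 : ∀ x : Lˣ, x ∈ B → (∀ i, v i (Additive.ofMul x) = 0) → x ∈ A := by
    intro x hxB hx
    obtain ⟨n, hn⟩ := hAB x hxB
    have h1 : IsOfFinOrder (x ^ (p ^ n)) := key _ hn (fun i => by
      rw [ofMul_pow, map_nsmul, hx i, smul_zero])
    have h2 : IsOfFinOrder x := h1.of_pow (pow_pos hp.pos n).ne'
    obtain ⟨m, hm, hmx⟩ := torsion_pow hp x h2 n
    obtain ⟨d, rfl⟩ := Nat.exists_eq_add_of_le hm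
    rw [← hmx, pow_add, pow_mul]
    exact A.pow_mem hn _
  let V : Additive B →ₗ[ℤ] (Fin n → ℤ) := LinearMap.pi (fun i => (v i).comp iB)
  have hker : (LinearMap.ker V).FG := by
    have hk : ∀ b : LinearMap.ker V, iB b.1 ∈ LinearMap.range iA := by
      rintro ⟨b, hb⟩
      refine ⟨Additive.ofMul ⟨b.toMul.1, key2 _ b.toMul.2 ?_⟩, rfl⟩
      intro i
      exact congrFun (LinearMap.mem_ker.1 hb) i
    let j : LinearMap.ker V →ₗ[ℤ] LinearMap.range iA :=
      LinearMap.codRestrict _ (iB.comp (Submodule.subtype _)) hk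
    have hj : Function.Injective j := by
      intro a b h
      have := congrArg Subtype.val h
      exact Subtype.ext (Subtype.ext this)
    have : IsNoetherian ℤ (LinearMap.ker V) := isNoetherian_of_injective j hj
    exact (Module.Finite.iff_fg).1 inferInstance
  have hT : (⊤ : Submodule ℤ (Additive B)).FG :=
    Submodule.fg_of_fg_map_of_fg_inf_ker V (IsNoetherian.noetherian _) (by simpa using hker)
  have hBf : Module.Finite ℤ (Additive B) := ⟨hT⟩
  have : AddGroup.FG (Additive B) := Module.Finite.iff_addGroup_fg.mp hBf
  exact (Group.fg_iff_subgroup_fg B).1 (GroupFG.iff_add_fg.2 this)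

theorem exists_sat {K : Type*} [Field K] {p : ℕ} (hp : p.Prime) [CharP K p]
    (A : Subgroup Kˣ) (hA : A.FG) :
    ∃ (L : Subfield K) (B : Subgroup Kˣ), B.FG ∧ A ≤ B ∧ (∀ u ∈ B, (u : K) ∈ L) ∧
      ∀ u : Kˣ, (u : K) ∈ L → u ^ p ∈ B → u ∈ B := by
  have : Fact p.Prime := ⟨hp⟩
  let _ : Algebra (ZMod p) K := ZMod.algebra K p
  obtain ⟨S, hS⟩ := id hA
  classical
  let L : IntermediateField (ZMod p) K := IntermediateField.adjoin (ZMod p) ((fun u : Kˣ => (u : K)) '' (S : Set Kˣ))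
  have hLfg : L.FG := ⟨S.image (fun u : Kˣ => (u : K)), by simp [L]⟩
  have : Algebra.EssFiniteType (ZMod p) L := IntermediateField.essFiniteType_iff.2 hLfg
  have : CharP L p := charP_of_injective_algebraMap (algebraMap (ZMod p) L).injective p
  let j : Lˣ →* Kˣ := Units.map L.val.toMonoidHom
  have hj : Function.Injective j := Units.map_injective Subtype.val_injective
  have hjL : ∀ u : Kˣ, (u : K) ∈ L ↔ u ∈ j.range := by
    intro u
    constructor
    · intro h
      exact ⟨Units.mk0 ⟨u, h⟩ (fun h' => u.ne_zero (congrArg Subtype.val h')), by ext; rfl⟩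
    · rintro ⟨w, rfl⟩
      exact (w : L).2
  have hAj : A ≤ j.range := by
    rw [← hS, Subgroup.closure_le]
    intro u hu
    exact (hjL u).1 (IntermediateField.subset_adjoin _ _ ⟨u, hu, rfl⟩)
  have hmap : (A.comap j).map j = A := Subgroup.map_comap_eq_self hAj
  have hAc : (A.comap j).FG := by
    have e : A.comap j ≃* (A.comap j).map j := Subgroup.equivMapOfInjective _ j hj
    rw [hmap] at e
    have : Group.FG A := (Group.fg_iff_subgroup_fg _).2 hA
    exact (Group.fg_iff_subgroup_fg _).1 (Group.fg_of_surjective (f := e.symm.toMonoidHom) e.symm.surjective)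
  let BL : Subgroup Lˣ :=
    { carrier := {u | ∃ n : ℕ, u ^ (p ^ n) ∈ A.comap j}
      one_mem' := ⟨0, by simp⟩
      mul_mem' := by
        rintro a b ⟨n, hn⟩ ⟨m, hm⟩
        refine ⟨n + m, ?_⟩
        rw [mul_pow]
        refine mul_mem ?_ ?_
        · rw [pow_add, pow_mul]; exact pow_mem hn _
        · rw [add_comm, pow_add, pow_mul]; exact pow_mem hm _
      inv_mem' := by
        rintro a ⟨n, hn⟩
        exact ⟨n, by rw [inv_pow]; exact inv_mem hn⟩ }
  have hBL : BL.FG := sat_fg hp (A.comap j) BL hAc (fun u hu => hu)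
  have hBmap : (BL.map j).FG := by
    obtain ⟨T, hT⟩ := hBL
    refine ⟨T.image j, ?_⟩
    rw [← hT, MonoidHom.map_closure, Finset.coe_image]
  refine ⟨L.toSubfield, BL.map j, hBmap, ?_, ?_, ?_⟩
  · rw [← hmap]
    exact Subgroup.map_mono (fun u hu => ⟨0, by simpa using hu⟩)
  · rintro u ⟨w, _, rfl⟩
    exact (w : L).2
  · intro u hu hup
    obtain ⟨w, rfl⟩ := (hjL u).1 hu
    refine ⟨w, ?_, rfl⟩
    rw [← map_pow] at hup
    obtain ⟨w', ⟨n, hn⟩, hw'⟩ := hup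
    rw [hj hw', ← pow_mul, ← pow_succ'] at hn
    exact ⟨n + 1, hn⟩


theorem finite_common_zeros {K : Type*} [Field K] (f g : MvPolynomial (Fin 2) K)
    (hf : Irreducible f) (hfg : ¬ f ∣ g) :
    {v : Fin 2 → K | MvPolynomial.eval v f = 0 ∧ MvPolynomial.eval v g = 0}.Finite := by
  let J : Ideal (MvPolynomial (Fin 2) K) := Ideal.span {f, g}
  have hfin : J.minimalPrimes.Finite := Ideal.finite_minimalPrimes_of_isNoetherianRing _ J
  have hinj : Set.InjOn (fun v : Fin 2 → K => RingHom.ker (MvPolynomial.eval v))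
      ((fun v : Fin 2 → K => RingHom.ker (MvPolynomial.eval v)) ⁻¹' J.minimalPrimes) := by
    intro v _ w _ h
    funext i
    have h1 : (MvPolynomial.X i - MvPolynomial.C (v i) : MvPolynomial (Fin 2) K) ∈
        RingHom.ker (MvPolynomial.eval v) := by simp [RingHom.mem_ker]
    rw [show RingHom.ker (MvPolynomial.eval v) = RingHom.ker (MvPolynomial.eval w) from h] at h1
    simp only [RingHom.mem_ker, map_sub, MvPolynomial.eval_X, MvPolynomial.eval_C] at h1
    exact (sub_eq_zero.1 h1).symm
  refine (hfin.preimage hinj).subset ?_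
  rintro v ⟨hvf, hvg⟩
  have hle : J ≤ RingHom.ker (MvPolynomial.eval v) := by
    rw [Ideal.span_le]
    rintro x (rfl | rfl)
    · exact hvf
    · exact hvg
  have hmax : (RingHom.ker (MvPolynomial.eval v)).IsPrime := RingHom.ker_isPrime _
  obtain ⟨P, hP, hPle⟩ := Ideal.exists_minimalPrimes_le hle
  change RingHom.ker (MvPolynomial.eval v) ∈ J.minimalPrimes
  rcases hPle.lt_or_eq with hlt | heq
  · exfalso
    have hPp : P.IsPrime := hP.1.1
    have hJP : J ≤ P := hP.1.2
    have hfp : (Ideal.span {f}).IsPrime :=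
      (Ideal.span_singleton_prime hf.ne_zero).2 hf.prime
    have hfP : Ideal.span {f} < P := by
      refine lt_of_le_of_ne ?_ ?_
      · rw [Ideal.span_singleton_le_iff_mem]
        exact hJP (Ideal.subset_span (by simp))
      · intro h
        have : g ∈ P := hJP (Ideal.subset_span (by simp))
        rw [← h, Ideal.mem_span_singleton] at this
        exact hfg this
    have hbot : (⊥ : Ideal (MvPolynomial (Fin 2) K)) < Ideal.span {f} := by
      rw [bot_lt_iff_ne_bot, Ne, Ideal.span_singleton_eq_bot]
      exact hf.ne_zero
    let s : LTSeries (PrimeSpectrum (MvPolynomial (Fin 2) K)) :=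
      ⟨3, ![⟨⊥, Ideal.isPrime_bot⟩, ⟨_, hfp⟩, ⟨P, hPp⟩, ⟨_, hmax⟩], by
        intro i
        fin_cases i
        · exact hbot
        · exact hfP
        · exact hlt⟩
    have h1 := Order.LTSeries.length_le_krullDim s
    have h2 : ringKrullDim (MvPolynomial (Fin 2) K) = ringKrullDim K + Nat.card (Fin 2) :=
      MvPolynomial.ringKrullDim_of_isNoetherianRing
    rw [ringKrullDim_eq_zero_of_field] at h2
    rw [ringKrullDim] at h2
    rw [h2] at h1
    have h3 : s.length = 3 := rfl
    rw [h3] at h1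
    simp at h1
    exact absurd h1 (by decide)
  · rw [← heq]; exact hP

theorem eq_const_of_infinite {K : Type*} [Field K] (f g : MvPolynomial (Fin 2) K)
    (hf : Irreducible f) (hsupp : g.support ⊆ f.support)
    (h : {v : Fin 2 → K | MvPolynomial.eval v f = 0 ∧ MvPolynomial.eval v g = 0}.Infinite) :
    ∃ c : K, g = MvPolynomial.C c * f := by
  have hd : f ∣ g := by
    by_contra hfg
    exact h (finite_common_zeros f g hf hfg)
  obtain ⟨q, rfl⟩ := hd
  by_cases hq : q = 0
  · exact ⟨0, by simp [hq]⟩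
  have h1 : (f * q).totalDegree ≤ f.totalDegree := Finset.sup_mono hsupp
  rw [MvPolynomial.totalDegree_mul_of_isDomain hf.ne_zero hq] at h1
  have h2 : q.totalDegree = 0 := by omega
  rw [MvPolynomial.totalDegree_eq_zero_iff_eq_C] at h2
  exact ⟨_, by rw [h2, mul_comm]⟩

theorem fun_pow_p_injective {K I : Type*} [Field K] {p : ℕ} (hp : p.Prime) [CharP K p] (n : ℕ)
    (x y : I → Kˣ) (h : x ^ (p ^ n) = y ^ (p ^ n)) : x = y := by
  funext i
  exact units_pow_p_injective hp n _ _ (congrFun h i)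

/-- The subgroup of elements of `H` all of whose coordinates lie in `B`. -/
def coordSub {K I : Type*} [Field K] (H : Subgroup (I → Kˣ)) (B : Subgroup Kˣ) :
    Subgroup (I → Kˣ) := H ⊓ Subgroup.pi Set.univ (fun _ => B)

theorem mem_coordSub {K I : Type*} [Field K] (H : Subgroup (I → Kˣ)) (B : Subgroup Kˣ)
    (z : I → Kˣ) : z ∈ coordSub H B ↔ z ∈ H ∧ ∀ i, z i ∈ B := by
  simp [coordSub, Subgroup.mem_pi]

theorem pi_fg {K I : Type*} [Field K] [Fintype I] (B : Subgroup Kˣ) (hB : B.FG) :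
    (Subgroup.pi Set.univ (fun _ : I => B)).FG := by
  have : Group.FG B := (Group.fg_iff_subgroup_fg _).2 hB
  let f : (I → B) →* (Subgroup.pi Set.univ (fun _ : I => B)) :=
    { toFun := fun z => ⟨fun i => (z i : Kˣ), fun i _ => (z i).2⟩
      map_one' := rfl
      map_mul' := fun _ _ => rfl }
  have hf : Function.Surjective f := by
    rintro ⟨z, hz⟩
    exact ⟨fun i => ⟨z i, hz i trivial⟩, rfl⟩
  exact (Group.fg_iff_subgroup_fg _).1 (Group.fg_of_surjective hf)

theorem coordSub_fg {K I : Type*} [Field K] [Fintype I] (H : Subgroup (I → Kˣ)) (B : Subgroup Kˣ)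
    (hB : B.FG) : (coordSub H B).FG :=
  subgroup_fg_of_le (pi_fg B hB) inf_le_right

/-- finitely many cosets -/
theorem finite_cosets {G : Type*} [CommGroup G] (Γ : Subgroup G) (hΓ : Γ.FG) (n : ℕ) (hn : n ≠ 0) :
    ∃ R : Set G, R.Finite ∧ R ⊆ Γ ∧ ∀ z ∈ Γ, ∃ δ ∈ R, ∃ w ∈ Γ, z = δ * w ^ n := by
  have : Group.FG Γ := (Group.fg_iff_subgroup_fg _).2 hΓ
  have := Subgroup.finiteIndex_range_powMonoidHom_of_fg Γ hn
  have hfin : Finite (Γ ⧸ (powMonoidHom (α := Γ) n).range) := Subgroup.finite_quotient_of_finiteIndex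
  refine ⟨Set.range (fun x : Γ ⧸ (powMonoidHom (α := Γ) n).range => ((Quotient.out x : Γ) : G)),
    Set.finite_range _, ?_, ?_⟩
  · rintro _ ⟨x, rfl⟩
    exact (Quotient.out x).2
  · intro z hz
    let zz : Γ := ⟨z, hz⟩
    refine ⟨_, ⟨(zz : Γ ⧸ (powMonoidHom (α := Γ) n).range), rfl⟩, ?_⟩
    obtain ⟨⟨_, ⟨w, rfl⟩⟩, hw⟩ := QuotientGroup.mk_out_eq_mul (powMonoidHom (α := Γ) n).range zz
    refine ⟨(w : G)⁻¹, inv_mem w.2, ?_⟩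
    have := congrArg Subtype.val hw
    simp only [powMonoidHom_apply, Subgroup.coe_mul, Subgroup.coe_pow] at this
    beta_reduce
    rw [show (((Quotient.out (zz : Γ ⧸ (powMonoidHom (α := Γ) n).range)) : Γ) : G) = z * (w : G) ^ n from this]
    simp

section core
variable {K I : Type*} [Field K] [Fintype I] {p : ℕ}

theorem sat_iter {L : Subfield K} {B : Subgroup Kˣ}
    (hsat : ∀ u : Kˣ, (u : K) ∈ L → u ^ p ∈ B → u ∈ B) (n : ℕ) (u : Kˣ) (hu : (u : K) ∈ L)
    (h : u ^ (p ^ n) ∈ B) : u ∈ B := by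
  induction n with
  | zero => simpa using h
  | succ n ih =>
    apply ih
    apply hsat
    · rw [Units.val_pow_eq_pow_val]; exact pow_mem hu _
    · rwa [← pow_mul, ← pow_succ]

theorem descent (hp : p.Prime) [CharP K p] (i0 : I)
    (H : Subgroup (I → Kˣ)) (hH0 : ∀ z ∈ H, z i0 = 1)
    (a : I → Kˣ) (ha0 : a i0 = 1)
    (hP : ∀ b : I → K, b i0 = 0 →
      {z | z ∈ H ∧ ∑ i, (a i : K) * (z i : K) = 0 ∧ ∑ i, b i * (z i : K) = 0}.Infinite → b = 0)
    (L : Subfield K) (B : Subgroup Kˣ) (hBL : ∀ u ∈ B, (u : K) ∈ L)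
    (hsat : ∀ u : Kˣ, (u : K) ∈ L → u ^ p ∈ B → u ∈ B) (haB : ∀ i, a i ∈ B)
    (n : ℕ) (δ : I → Kˣ) (hδ : δ ∈ coordSub H B)
    (hinf : {z | ∑ i, (a i : K) * (z i : K) = 0 ∧ ∃ w ∈ coordSub H B, z = δ * w ^ (p ^ n)}.Infinite) :
    ∃ b : I → Kˣ, (∀ i, b i ∈ B) ∧ a * δ = b ^ (p ^ n) := by
  have : Fact p.Prime := ⟨hp⟩
  let Lq : Subfield K := L.map (iterateFrobenius K p n)
  by_cases hall : ∀ i, ((a i * δ i : Kˣ) : K) ∈ Lq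
  · have h1 : ∀ i, ∃ b : Kˣ, (b : K) ∈ L ∧ a i * δ i = b ^ (p ^ n) := by
      intro i
      obtain ⟨y, hy, hyi⟩ := hall i
      rw [iterateFrobenius_def] at hyi
      have hy0 : y ≠ 0 := by
        rintro rfl
        rw [zero_pow (pow_pos hp.pos n).ne'] at hyi
        exact (a i * δ i).ne_zero hyi.symm
      refine ⟨Units.mk0 y hy0, hy, ?_⟩
      ext
      rw [← hyi]; simp
    choose b hbL hb using h1
    refine ⟨b, fun i => sat_iter hsat n _ (hbL i) ?_, funext hb⟩
    rw [← hb]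
    exact mul_mem (haB i) (((mem_coordSub _ _ _).1 hδ).2 i)
  · exfalso
    push Not at hall
    obtain ⟨j, hj⟩ := hall
    have hj' : ((a j * δ j : Kˣ) : K) ∉ Submodule.span Lq {(1 : K)} := by
      intro h
      obtain ⟨c, hc⟩ := Submodule.mem_span_singleton.1 h
      apply hj
      rw [← hc, Subfield.smul_def, smul_eq_mul, mul_one]
      exact c.2
    obtain ⟨ℓ, hℓj, hℓ1⟩ := Submodule.exists_dual_map_eq_bot_of_notMem hj' inferInstance
    have hℓ1 : ℓ 1 = 0 := by
      have : ℓ 1 ∈ (Submodule.span Lq {(1 : K)}).map ℓ :=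
        ⟨1, Submodule.subset_span rfl, rfl⟩
      rw [hℓ1] at this
      exact this
    let b : I → K := fun i => ((ℓ ((a i * δ i : Kˣ) : K) : Lq) : K) * ((δ i)⁻¹ : Kˣ)
    have hδ0 := hH0 δ ((mem_coordSub _ _ _).1 hδ).1
    have hb0 : b i0 = 0 := by
      simp [b, ha0, hδ0, hℓ1]
    have hb := hP b hb0 (hinf.mono ?_)
    · have := congrFun hb j
      simp only [b, Pi.zero_apply, mul_eq_zero, Units.ne_zero, or_false] at this
      exact hℓj (by exact_mod_cast this)
    · rintro z ⟨hz, w, hw, rfl⟩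
      refine ⟨?_, hz, ?_⟩
      · exact mul_mem ((mem_coordSub _ _ _).1 hδ).1 (pow_mem ((mem_coordSub _ _ _).1 hw).1 _)
      · let c : I → Lq := fun i => ⟨(w i : K) ^ (p ^ n), ⟨(w i : K), hBL _ (((mem_coordSub _ _ _).1 hw).2 i), by
          rw [iterateFrobenius_def]⟩⟩
        have h1 : ∑ i, c i • ((a i * δ i : Kˣ) : K) = 0 := by
          rw [← hz]
          refine Finset.sum_congr rfl fun i _ => ?_
          simp only [c, Subfield.smul_def, smul_eq_mul, Pi.mul_apply, Pi.pow_apply, Units.val_mul,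
            Units.val_pow_eq_pow_val]
          ring
        have h2 := congrArg (fun x => ((ℓ x : Lq) : K)) h1
        simp only [map_sum, map_smul, map_zero] at h2
        push_cast at h2
        rw [← h2]
        refine Finset.sum_congr rfl fun i _ => ?_
        simp only [b, c, Pi.mul_apply, Pi.pow_apply, Units.val_mul, smul_eq_mul, Subfield.coe_mul,
          Units.val_pow_eq_pow_val]
        have : ((δ i)⁻¹ : Kˣ) * (δ i : K) = 1 := by simp
        linear_combination ((ℓ ((a i : K) * (δ i : K)) : Lq) : K) * (w i : K) ^ p ^ n * this

theorem core1 (hp : p.Prime) [CharP K p] (i0 : I)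
    (H : Subgroup (I → Kˣ)) (hH0 : ∀ z ∈ H, z i0 = 1)
    (hdiv : ∀ n : ℕ, n ≠ 0 → ∀ z ∈ H, ∃ w ∈ H, w ^ n = z)
    (a : I → Kˣ) (ha0 : a i0 = 1)
    (hP : ∀ b : I → K, b i0 = 0 →
      {z | z ∈ H ∧ ∑ i, (a i : K) * (z i : K) = 0 ∧ ∑ i, b i * (z i : K) = 0}.Infinite → b = 0)
    (L : Subfield K) (B : Subgroup Kˣ) (hB : B.FG) (hBL : ∀ u ∈ B, (u : K) ∈ L)
    (hsat : ∀ u : Kˣ, (u : K) ∈ L → u ^ p ∈ B → u ∈ B) (haB : ∀ i, a i ∈ B) :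
    ∃ k : ℕ, 1 ≤ k ∧ ∃ Es : Set ((I → Kˣ) × (I → Kˣ)), Es.Finite ∧
      (∀ x ∈ Es, x.1 ∈ H ∧ x.2 ∈ H) ∧
      {z | z ∈ coordSub H B ∧ ∑ i, (a i : K) * (z i : K) = 0} =
        {z | ∃ x ∈ Es, ∃ n : ℕ, z = x.1 * x.2 ^ ((p ^ k) ^ n)} := by
  have : Fact p.Prime := ⟨hp⟩
  have hGH : ∀ z ∈ coordSub H B, z ∈ H := fun z hz => ((mem_coordSub _ _ _).1 hz).1
  have hfgΓ := coordSub_fg H B hB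
  by_cases hgood : ∀ n : ℕ, ∃ γ ∈ coordSub H B, ∃ b : I → Kˣ, (∀ i, b i ∈ B) ∧ a * γ = b ^ (p ^ n)
  swap
  · -- finite case
    push Not at hgood
    obtain ⟨n, hn⟩ := hgood
    obtain ⟨R, hR, hRΓ, hcos⟩ := finite_cosets _ hfgΓ (p ^ n) (pow_pos hp.pos n).ne'
    have hfin : {z | z ∈ coordSub H B ∧ ∑ i, (a i : K) * (z i : K) = 0}.Finite := by
      refine (hR.biUnion (t := fun δ => {z | ∑ i, (a i : K) * (z i : K) = 0 ∧
        ∃ w ∈ coordSub H B, z = δ * w ^ (p ^ n)}) ?_).subset ?_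
      · intro δ hδ
        by_contra hinf
        obtain ⟨b, hb, hb'⟩ := descent hp i0 H hH0 a ha0 hP L B hBL hsat haB n δ (hRΓ hδ) hinf
        exact hn δ (hRΓ hδ) b hb hb'
      · rintro z ⟨hz, hz'⟩
        obtain ⟨δ, hδ, w, hw, rfl⟩ := hcos z hz
        exact Set.mem_biUnion hδ ⟨hz', w, hw, rfl⟩
    refine ⟨1, le_rfl, (fun z => (z, 1)) '' {z | z ∈ coordSub H B ∧ ∑ i, (a i : K) * (z i : K) = 0},
      hfin.image _, ?_, ?_⟩
    · rintro _ ⟨z, hz, rfl⟩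
      exact ⟨hGH _ hz.1, one_mem H⟩
    · ext z
      constructor
      · intro hz
        exact ⟨_, ⟨z, hz, rfl⟩, 0, by simp⟩
      · rintro ⟨_, ⟨w, hw, rfl⟩, n, rfl⟩
        simpa using hw
  · -- isotrivial case
    have hq : ∃ k : ℕ, 1 ≤ k ∧ a ^ (p ^ k - 1) ∈ coordSub H B := by
      let BI : Subgroup (I → Kˣ) := Subgroup.pi Set.univ (fun _ => B)
      have haBI : a ∈ BI := fun i _ => haB i
      have : Group.FG BI := (Group.fg_iff_subgroup_fg _).2 (pi_fg B hB)
      let N := (coordSub H B).subgroupOf BI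
      have hk := krull_pow hp (((⟨a, haBI⟩ : BI) : BI ⧸ N)) (by
        intro n
        obtain ⟨γ, hγ, b, hb, hab⟩ := hgood n
        refine ⟨((⟨b, fun i _ => hb i⟩ : BI) : BI ⧸ N), ?_⟩
        rw [← QuotientGroup.mk_pow, QuotientGroup.eq, Subgroup.mem_subgroupOf]
        simp only [Subgroup.coe_mul, Subgroup.coe_inv, Subgroup.coe_pow]
        rw [← hab]
        simpa using hγ)
      obtain ⟨k, hk, hk'⟩ := hk
      refine ⟨k, hk, ?_⟩
      rw [← QuotientGroup.mk_pow, QuotientGroup.eq_one_iff, Subgroup.mem_subgroupOf] at hk'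
      simpa using hk'
    obtain ⟨k, hk, hγ⟩ := hq
    set γ := a ^ (p ^ k - 1) with hγdef
    have hq1 : 1 < p ^ k := Nat.one_lt_pow (by omega) hp.one_lt
    have haγ : a * γ = a ^ (p ^ k) := by
      rw [hγdef, ← pow_succ']; congr 1; omega
    set Z : Set (I → Kˣ) := {z | z ∈ coordSub H B ∧ ∑ i, (a i : K) * (z i : K) = 0} with hZ
    have hsum : ∀ w : I → Kˣ, ∑ i, (a i : K) * ((γ * w ^ (p ^ k)) i : Kˣ) =
        (∑ i, (a i : K) * (w i : K)) ^ (p ^ k) := by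
      intro w
      rw [sum_pow_char_pow]
      refine Finset.sum_congr rfl fun i _ => ?_
      have h := congrArg (fun f : I → Kˣ => (f i : K)) haγ
      simp only [Pi.mul_apply, Pi.pow_apply, Units.val_mul, Units.val_pow_eq_pow_val] at h ⊢
      rw [← mul_assoc, h, mul_pow]
    have hφ : ∀ w ∈ Z, γ * w ^ (p ^ k) ∈ Z := by
      rintro w ⟨hw, hw'⟩
      refine ⟨mul_mem hγ (pow_mem hw _), ?_⟩
      rw [hsum, hw', zero_pow (by omega)]
    have hφ' : ∀ w ∈ coordSub H B, γ * w ^ (p ^ k) ∈ Z → w ∈ Z := by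
      rintro w hw ⟨_, h⟩
      rw [hsum] at h
      exact ⟨hw, pow_eq_zero_iff (by omega) |>.1 h⟩
    set E : Set (I → Kˣ) := {z | z ∈ Z ∧ ¬ ∃ w ∈ Z, z = γ * w ^ (p ^ k)} with hE
    have hEfin : E.Finite := by
      obtain ⟨R, hR, hRΓ, hcos⟩ := finite_cosets _ hfgΓ (p ^ k) (by omega)
      refine (hR.biUnion (t := fun δ => E ∩ {z | ∑ i, (a i : K) * (z i : K) = 0 ∧
        ∃ w ∈ coordSub H B, z = δ * w ^ (p ^ k)}) ?_).subset ?_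
      · intro δ hδ
        by_cases hinf : {z | ∑ i, (a i : K) * (z i : K) = 0 ∧
          ∃ w ∈ coordSub H B, z = δ * w ^ (p ^ k)}.Infinite
        · obtain ⟨b, hb, hb'⟩ := descent hp i0 H hH0 a ha0 hP L B hBL hsat haB k δ (hRΓ hδ) hinf
          convert Set.finite_empty
          rw [Set.eq_empty_iff_forall_notMem]
          rintro z ⟨⟨hzZ, hzE⟩, hz, w, hw, rfl⟩
          have hδγ : γ * (b / a) ^ (p ^ k) = δ := by
            rw [div_pow, ← hb', ← haγ, mul_div_mul_left_eq_div]
            exact mul_div_cancel _ _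
          have hu : b / a ∈ coordSub H B := by
            rw [mem_coordSub]
            refine ⟨?_, fun i => div_mem (hb i) (haB i)⟩
            obtain ⟨u', hu', hu''⟩ := hdiv (p ^ k) (by omega) (δ / γ) (div_mem (hGH _ (hRΓ hδ)) (hGH _ hγ))
            have : b / a = u' := by
              apply fun_pow_p_injective hp k
              rw [hu'', ← hδγ, mul_div_cancel_left]
            rw [this]; exact hu'
          have heq : δ * w ^ (p ^ k) = γ * (b / a * w) ^ (p ^ k) := by
            rw [mul_pow, ← mul_assoc, hδγ]
          refine hzE ⟨b / a * w, hφ' _ (mul_mem hu hw) ?_, heq⟩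
          rw [← heq]; exact hzZ
        · exact (Set.not_infinite.1 hinf).subset Set.inter_subset_right
      · rintro z hz
        obtain ⟨δ, hδ, w, hw, hzw⟩ := hcos z hz.1.1
        exact Set.mem_biUnion hδ ⟨hz, hz.1.2, w, hw, hzw⟩
    obtain ⟨c, hcH, hc⟩ := hdiv (p ^ k - 1) (by omega) γ (hGH _ hγ)
    have hcq : γ * c = c ^ (p ^ k) := by
      rw [← hc, ← pow_succ]; congr 1; omega
    have hstep : ∀ (z : I → Kˣ) (n : ℕ), c⁻¹ * (c * z) ^ ((p ^ k) ^ (n + 1)) =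
        γ * (c⁻¹ * (c * z) ^ ((p ^ k) ^ n)) ^ (p ^ k) := by
      intro z n
      rw [mul_pow c⁻¹, pow_succ (p ^ k) n, pow_mul (c * z), ← mul_assoc]
      congr 1
      rw [inv_pow, ← hcq]
      simp
    have hiter : ∀ z ∈ Z, ∀ n : ℕ, c⁻¹ * (c * z) ^ ((p ^ k) ^ n) ∈ Z := by
      intro z hz n
      induction n with
      | zero => simpa using hz
      | succ n ih => rw [hstep]; exact hφ _ ih
    let Γc : Subgroup (I → Kˣ) := coordSub H B ⊔ Subgroup.closure {c}
    have hΓc : Γc.FG := hfgΓ.sup ⟨{c}, by simp⟩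
    have hΓcfg : Group.FG Γc := (Group.fg_iff_subgroup_fg _).2 hΓc
    have hcΓ : ∀ z ∈ coordSub H B, c * z ∈ Γc := fun z hz =>
      mul_mem (Subgroup.mem_sup_right (Subgroup.subset_closure rfl)) (Subgroup.mem_sup_left hz)
    let D : Set (I → Kˣ) := {z | z ∈ Z ∧ IsOfFinOrder (c * z)}
    have hD : D.Finite := by
      have h1 := (torsion_finite Γc).image (fun x : Γc => c⁻¹ * (x : I → Kˣ))
      refine h1.subset ?_
      rintro z ⟨hz, hz'⟩
      exact ⟨⟨c * z, hcΓ z hz.1⟩, Submonoid.isOfFinOrder_coe.1 hz', by simp⟩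
    have hdich : ∀ z ∈ Z, ∀ n : ℕ, (∃ e ∈ E, ∃ m : ℕ, z = c⁻¹ * (c * e) ^ ((p ^ k) ^ m)) ∨
        ∃ w ∈ Z, z = c⁻¹ * (c * w) ^ ((p ^ k) ^ n) := by
      intro z hz n
      induction n with
      | zero => exact Or.inr ⟨z, hz, by simp⟩
      | succ n ih =>
        rcases ih with h | ⟨w, hw, hzw⟩
        · exact Or.inl h
        · by_cases hwE : ∃ v ∈ Z, w = γ * v ^ (p ^ k)
          · obtain ⟨v, hv, rfl⟩ := hwE
            refine Or.inr ⟨v, hv, ?_⟩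
            rw [hzw, ← mul_assoc, mul_comm c γ, hcq, ← mul_pow, ← pow_mul, ← pow_succ']
          · exact Or.inl ⟨w, ⟨hw, hwE⟩, n, hzw⟩
    refine ⟨k, hk, (fun e => (c⁻¹, c * e)) '' E ∪ (fun z => (z, 1)) '' D,
      (hEfin.image _).union (hD.image _), ?_, ?_⟩
    · rintro _ (⟨e, he, rfl⟩ | ⟨z, hz, rfl⟩)
      · exact ⟨inv_mem hcH, mul_mem hcH (hGH _ he.1.1)⟩
      · exact ⟨hGH _ hz.1.1, one_mem H⟩
    · ext z
      constructor
      · intro hz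
        by_cases h : ∃ e ∈ E, ∃ m : ℕ, z = c⁻¹ * (c * e) ^ ((p ^ k) ^ m)
        · obtain ⟨e, he, m, hm⟩ := h
          exact ⟨_, Or.inl ⟨e, he, rfl⟩, m, hm⟩
        · refine ⟨_, Or.inr ⟨z, ⟨hz, ?_⟩, rfl⟩, 0, by simp⟩
          have hkr := krull_pow hp (⟨c * z, hcΓ z hz.1⟩ : Γc) (by
            intro n
            obtain ⟨w, hw, hzw⟩ := (hdich z hz n).resolve_left h
            refine ⟨⟨c * w, hcΓ w hw.1⟩ ^ (p ^ (k * n - n)), ?_⟩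
            apply Subtype.ext
            simp only [Subgroup.coe_pow]
            rw [← pow_mul, ← pow_add, Nat.sub_add_cancel (Nat.le_mul_of_pos_left n hk), pow_mul]
            conv_lhs => rw [hzw]
            simp)
          obtain ⟨m, hm, hm'⟩ := hkr
          have hm1 : 1 < p ^ m := Nat.one_lt_pow (by omega) hp.one_lt
          rw [isOfFinOrder_iff_pow_eq_one]
          exact ⟨p ^ m - 1, by omega, by simpa using congrArg Subtype.val hm'⟩
      · rintro ⟨_, ⟨e, he, rfl⟩ | ⟨w, hw, rfl⟩, n, rfl⟩
        · exact hiter e he.1 n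
        · simpa using hw.1
end core


theorem subgroup_fg_map {G G' : Type*} [Group G] [Group G'] (φ : G →* G') (H : Subgroup G)
    (h : H.FG) : (H.map φ).FG := by
  obtain ⟨S, hS, hfin⟩ := (Subgroup.fg_iff _).1 h
  exact (Subgroup.fg_iff _).2 ⟨φ '' S, by rw [← MonoidHom.map_closure, hS], hfin.image _⟩

theorem orbit_set {T : Type*} [CommGroup T] (Γ : Subgroup T) (α0 α : T) (q : ℕ) :
    (∀ n : ℕ, ¬ α0 * α ^ (q ^ n) ∈ Γ) ∨ (∃ n0 : ℕ, ∀ n : ℕ, α0 * α ^ (q ^ n) ∈ Γ ↔ n = n0) ∨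
      ∃ n0 d : ℕ, 1 ≤ d ∧ ∀ n : ℕ, α0 * α ^ (q ^ n) ∈ Γ ↔ ∃ j : ℕ, n = n0 + d * j := by
  classical
  by_cases h0 : ∃ n : ℕ, α0 * α ^ (q ^ n) ∈ Γ
  swap
  · left; simpa using h0
  right
  let n0 := Nat.find h0
  have hn0 : α0 * α ^ (q ^ n0) ∈ Γ := Nat.find_spec h0
  have hmin : ∀ n : ℕ, α0 * α ^ (q ^ n) ∈ Γ → n0 ≤ n := fun n hn => Nat.find_min' h0 hn
  by_cases h1 : ∃ d : ℕ, 1 ≤ d ∧ α0 * α ^ (q ^ (n0 + d)) ∈ Γ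
  swap
  · left
    refine ⟨n0, fun n => ⟨fun hn => ?_, fun hn => hn ▸ hn0⟩⟩
    by_contra hne
    have := hmin n hn
    refine h1 ⟨n - n0, by omega, ?_⟩
    rwa [Nat.add_sub_cancel' this]
  right
  let d := Nat.find h1
  have hd : 1 ≤ d ∧ α0 * α ^ (q ^ (n0 + d)) ∈ Γ := Nat.find_spec h1
  have hdmin : ∀ e : ℕ, 1 ≤ e → α0 * α ^ (q ^ (n0 + e)) ∈ Γ → d ≤ e :=
    fun e h h' => Nat.find_min' h1 ⟨h, h'⟩
  have hper : ∀ e : ℕ, α ^ (q ^ (n0 + e + d)) / α ^ (q ^ (n0 + e)) ∈ Γ := by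
    intro e
    have h2 : α ^ (q ^ (n0 + d)) / α ^ (q ^ n0) ∈ Γ := by
      have := div_mem hd.2 hn0
      rwa [mul_div_mul_left_eq_div] at this
    have h3 := pow_mem h2 (q ^ e)
    rw [div_pow, ← pow_mul, ← pow_mul, ← pow_add, ← pow_add] at h3
    rwa [show n0 + e + d = n0 + d + e by ring]
  have hiff : ∀ e : ℕ, α0 * α ^ (q ^ (n0 + e + d)) ∈ Γ ↔ α0 * α ^ (q ^ (n0 + e)) ∈ Γ := by
    intro e
    have : α0 * α ^ (q ^ (n0 + e + d)) =
      (α ^ (q ^ (n0 + e + d)) / α ^ (q ^ (n0 + e))) * (α0 * α ^ (q ^ (n0 + e))) := by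
      rw [mul_left_comm, div_mul_cancel]
    rw [this]
    exact Subgroup.mul_mem_cancel_left _ (hper e)
  refine ⟨n0, d, hd.1, fun n => ⟨fun hn => ?_, ?_⟩⟩
  · obtain ⟨e, rfl⟩ := Nat.exists_eq_add_of_le (hmin n hn)
    clear_value n0 d
    induction e using Nat.strong_induction_on with
    | _ e ih =>
      rcases Nat.eq_zero_or_pos e with rfl | he
      · exact ⟨0, rfl⟩
      · have hde := hdmin e he hn
        obtain ⟨e', rfl⟩ := Nat.exists_eq_add_of_le' hde
        have h4 : α0 * α ^ (q ^ (n0 + e')) ∈ Γ := by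
          rw [← hiff, add_assoc]; exact hn
        obtain ⟨j, hj⟩ := ih e' (by omega) h4
        exact ⟨j + 1, by rw [mul_add, mul_one, ← add_assoc, hj, add_assoc]⟩
  · rintro ⟨j, rfl⟩
    induction j with
    | zero => simpa using hn0
    | succ j ih =>
      rw [mul_add, mul_one, ← add_assoc, hiff]; exact ih

/-- Finite unions of groupless `F`-sets. -/
def IsFU {K : Type*} [Field K] (p : ℕ) (Γ : Subgroup (Kˣ × Kˣ)) (S : Set (Kˣ × Kˣ)) : Prop :=
  ∃ 𝒮 : Set (Set (Kˣ × Kˣ)), 𝒮.Finite ∧ (∀ S' ∈ 𝒮, IsGrouplessFSet₂ p Γ S') ∧ S = ⋃₀ 𝒮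

theorem IsFU.biUnion {K : Type*} [Field K] {p : ℕ} {Γ : Subgroup (Kˣ × Kˣ)} {J : Type*}
    {s : Set J} (hs : s.Finite) (t : J → Set (Kˣ × Kˣ)) (h : ∀ j ∈ s, IsFU p Γ (t j)) :
    IsFU p Γ (⋃ j ∈ s, t j) := by
  choose! 𝒮 h1 h2 h3 using h
  refine ⟨⋃ j ∈ s, 𝒮 j, hs.biUnion h1, ?_, ?_⟩
  · intro S' hS'
    simp only [Set.mem_iUnion] at hS'
    obtain ⟨j, hj, hS'⟩ := hS'
    exact h2 j hj S' hS'
  · ext g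
    simp only [Set.mem_iUnion, Set.mem_sUnion]
    constructor
    · rintro ⟨j, hj, hg⟩
      rw [h3 j hj] at hg
      obtain ⟨S', hS', hg⟩ := hg
      exact ⟨S', ⟨j, hj, hS'⟩, hg⟩
    · rintro ⟨S', ⟨j, hj, hS'⟩, hg⟩
      refine ⟨j, hj, ?_⟩
      rw [h3 j hj]
      exact ⟨S', hS', hg⟩

theorem isFU_orbit {K : Type*} [Field K] {p : ℕ} (Γ : Subgroup (Kˣ × Kˣ)) (α0 α : Kˣ × Kˣ)
    (k : ℕ) (hk : 1 ≤ k) : IsFU p Γ {g | g ∈ Γ ∧ ∃ n : ℕ, g = α0 * α ^ ((p ^ k) ^ n)} := by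
  rcases orbit_set Γ α0 α (p ^ k) with h | ⟨n0, h⟩ | ⟨n0, d, hd, h⟩
  · refine ⟨∅, Set.finite_empty, by simp, ?_⟩
    rw [Set.sUnion_empty, Set.eq_empty_iff_forall_notMem]
    rintro g ⟨hg, n, rfl⟩
    exact h n hg
  · refine ⟨{{α0 * α ^ ((p ^ k) ^ n0)}}, Set.finite_singleton _, ?_, ?_⟩
    · rintro S' rfl
      refine ⟨?_, 1, le_rfl, 0, 1, le_rfl, α0 * α ^ ((p ^ k) ^ n0), Fin.elim0, ?_⟩
      · rintro g rfl
        exact (h n0).2 rfl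
      · ext g
        simp
    · rw [Set.sUnion_singleton]
      ext g
      constructor
      · rintro ⟨hg, n, rfl⟩
        rw [(h n).1 hg]; rfl
      · rintro rfl
        exact ⟨(h n0).2 rfl, n0, rfl⟩
  · refine ⟨{{g | g ∈ Γ ∧ ∃ n : ℕ, g = α0 * α ^ ((p ^ k) ^ n)}}, Set.finite_singleton _, ?_, ?_⟩
    · rintro S' rfl
      refine ⟨fun g hg => hg.1, k, hk, 1, d, hd, α0, fun _ => α ^ ((p ^ k) ^ n0), ?_⟩
      ext g
      simp only [Finset.univ_unique, Finset.prod_singleton, Set.mem_ofPred_eq]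
      constructor
      · rintro ⟨hg, n, rfl⟩
        obtain ⟨j, rfl⟩ := (h n).1 hg
        exact ⟨fun _ => j, by rw [← pow_mul α, ← pow_add]⟩
      · rintro ⟨n, rfl⟩
        rw [← pow_mul α, ← pow_add]
        exact ⟨(h _).2 ⟨_, rfl⟩, _, rfl⟩
    · rw [Set.sUnion_singleton]

theorem IsFU.exists_fin {K : Type*} [Field K] {p : ℕ} {Γ : Subgroup (Kˣ × Kˣ)}
    {S : Set (Kˣ × Kˣ)} (h : IsFU p Γ S) : ∃ (n : ℕ) (Ss : Fin n → Set (Kˣ × Kˣ)),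
      (∀ i, IsGrouplessFSet₂ p Γ (Ss i)) ∧ S = ⋃ i, Ss i := by
  obtain ⟨𝒮, hfin, h1, rfl⟩ := h
  have : Finite 𝒮 := hfin
  obtain ⟨n, ⟨e⟩⟩ := Finite.exists_equiv_fin 𝒮
  refine ⟨n, fun i => (e.symm i : Set (Kˣ × Kˣ)), fun i => h1 _ (e.symm i).2, ?_⟩
  rw [Set.sUnion_eq_iUnion]
  exact (e.symm.surjective.iUnion_comp (fun i : 𝒮 => (i : Set (Kˣ × Kˣ)))).symm

/-- The monomial map, normalized at `i0`. -/
def monoMap {K : Type*} [Field K] (s : Finset (Fin 2 →₀ ℕ)) (i0 : Fin 2 →₀ ℕ) :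
    (Kˣ × Kˣ) →* (s → Kˣ) where
  toFun g i := (g.1 ^ (i.1 0) * g.2 ^ (i.1 1)) / (g.1 ^ (i0 0) * g.2 ^ (i0 1))
  map_one' := by ext; simp
  map_mul' g h := by
    funext i
    simp only [Prod.fst_mul, Prod.snd_mul, Pi.mul_apply, mul_pow]
    rw [div_mul_div_comm]
    congr 1 <;> exact mul_mul_mul_comm _ _ _ _

theorem eval_monoMap {K : Type*} [Field K] (s : Finset (Fin 2 →₀ ℕ)) (i0 : Fin 2 →₀ ℕ)
    (h : MvPolynomial (Fin 2) K) (hs : h.support ⊆ s) (g : Kˣ × Kˣ) :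
    MvPolynomial.eval ![(g.1 : K), (g.2 : K)] h =
      ((g.1 : K) ^ (i0 0) * (g.2 : K) ^ (i0 1)) *
        ∑ i : s, h.coeff i.1 * ((monoMap s i0 g i : Kˣ) : K) := by
  rw [MvPolynomial.eval_eq', Finset.mul_sum, Finset.univ_eq_attach]
  refine Eq.trans ?_ (Finset.sum_attach s (fun i => (g.1 : K) ^ (i0 0) * (g.2 : K) ^ (i0 1) * (h.coeff i *
      (((g.1 ^ (i 0) * g.2 ^ (i 1)) / (g.1 ^ (i0 0) * g.2 ^ (i0 1)) : Kˣ) : K)))).symm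
  rw [Finset.sum_subset hs]
  · refine Finset.sum_congr rfl fun i _ => ?_
    simp only [Fin.prod_univ_two, Units.val_div_eq_div_val, Units.val_mul, Units.val_pow_eq_pow_val]
    have h1 : (g.1 : K) ≠ 0 := g.1.ne_zero
    have h2 : (g.2 : K) ≠ 0 := g.2.ne_zero
    simp
    field_simp
  · intro i _ hi
    rw [MvPolynomial.notMem_support_iff.1 hi, zero_mul]

theorem torus_root {K : Type*} [Field K] [IsAlgClosed K] (n : ℕ) (hn : n ≠ 0) (u : Kˣ) :
    ∃ v : Kˣ, v ^ n = u := by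
  obtain ⟨z, hz⟩ := IsAlgClosed.exists_pow_nat_eq (u : K) (Nat.pos_of_ne_zero hn)
  have hz0 : z ≠ 0 := by
    rintro rfl
    rw [zero_pow hn] at hz
    exact u.ne_zero hz.symm
  exact ⟨Units.mk0 z hz0, Units.ext (by simpa using hz)⟩

theorem curve_intersection_groupless_F_sets_of_finite_stabilizer
    (K : Type*) [Field K] [IsAlgClosed K] (p : ℕ) (hp : p.Prime) [CharP K p]
    (f : MvPolynomial (Fin 2) K) (hf : Irreducible f)
    (X : Set (Kˣ × Kˣ))
    (hX : X = {g : Kˣ × Kˣ | MvPolynomial.eval ![(g.1 : K), (g.2 : K)] f = 0})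
    (hXinf : X.Infinite)
    (Γ : Subgroup (Kˣ × Kˣ)) (hΓ : Γ.FG)
    (hstab : {g : Kˣ × Kˣ | (fun x => g * x) '' X = X}.Finite) :
    ∃ (n : ℕ) (Ss : Fin n → Set (Kˣ × Kˣ)),
      (∀ i, IsGrouplessFSet₂ p Γ (Ss i)) ∧ X ∩ ↑Γ = ⋃ i, Ss i := by
  classical
  apply IsFU.exists_fin
  obtain ⟨i0, hi0⟩ : f.support.Nonempty := by
    rw [Finset.nonempty_iff_ne_empty, Ne, MvPolynomial.support_eq_empty]
    exact hf.ne_zero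
  let M := monoMap (K := K) f.support i0
  have hcoef : ∀ i : f.support, f.coeff i.1 ≠ 0 := fun i => MvPolynomial.mem_support_iff.1 i.2
  let c0 : Kˣ := Units.mk0 _ (hcoef ⟨i0, hi0⟩)
  let a : f.support → Kˣ := fun i => Units.mk0 _ (hcoef i) / c0
  have ha0 : a ⟨i0, hi0⟩ = 1 := div_self' _
  have hM0 : ∀ g, M g ⟨i0, hi0⟩ = 1 := fun g => div_self' _
  have hnz : ∀ g : Kˣ × Kˣ, (g.1 : K) ^ (i0 0) * (g.2 : K) ^ (i0 1) ≠ 0 := fun g =>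
    mul_ne_zero (pow_ne_zero _ g.1.ne_zero) (pow_ne_zero _ g.2.ne_zero)
  have hXM : ∀ g, g ∈ X ↔ ∑ i, (a i : K) * (M g i : K) = 0 := by
    intro g
    rw [hX, Set.mem_ofPred_eq, eval_monoMap f.support i0 f subset_rfl, mul_eq_zero,
      or_iff_right (hnz g)]
    have : ∑ i, (a i : K) * (M g i : K) = (c0 : K)⁻¹ * ∑ i : f.support, f.coeff i.1 *
        ((monoMap f.support i0 g i : Kˣ) : K) := by
      rw [Finset.mul_sum]
      refine Finset.sum_congr rfl fun i _ => ?_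
      simp only [a, M, Units.val_div_eq_div_val, Units.val_mk0]
      rw [div_eq_inv_mul, mul_assoc]
    rw [this, mul_eq_zero, or_iff_right (inv_ne_zero c0.ne_zero)]
  have hdiv : ∀ n : ℕ, n ≠ 0 → ∀ z ∈ M.range, ∃ w ∈ M.range, w ^ n = z := by
    rintro n hn _ ⟨g, rfl⟩
    obtain ⟨u, hu⟩ := torus_root n hn g.1
    obtain ⟨v, hv⟩ := torus_root n hn g.2
    exact ⟨M (u, v), ⟨_, rfl⟩, by rw [← map_pow, Prod.pow_mk, hu, hv]⟩
  have hP : ∀ b : f.support → K, b ⟨i0, hi0⟩ = 0 → {z | z ∈ M.range ∧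
      ∑ i, (a i : K) * (z i : K) = 0 ∧ ∑ i, b i * (z i : K) = 0}.Infinite → b = 0 := by
    intro b hb hinf
    let h : MvPolynomial (Fin 2) K := ∑ i : f.support, MvPolynomial.monomial i.1 (b i)
    have hc : ∀ i : f.support, h.coeff i.1 = b i := by
      intro i
      simp only [h, MvPolynomial.coeff_sum, MvPolynomial.coeff_monomial]
      rw [Finset.sum_eq_single i]
      · simp
      · intro j _ hj
        rw [if_neg (fun hh => hj (Subtype.ext hh))]
      · simp
    have hs : h.support ⊆ f.support := by
      intro m hm
      by_contra hmf
      refine MvPolynomial.mem_support_iff.1 hm ?_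
      simp only [h, MvPolynomial.coeff_sum, MvPolynomial.coeff_monomial]
      refine Finset.sum_eq_zero fun j _ => if_neg ?_
      rintro rfl
      exact hmf j.2
    have hinf2 : {g | g ∈ X ∧ ∑ i, b i * (M g i : K) = 0}.Infinite := by
      intro hfin
      refine hinf ((hfin.image M).subset ?_)
      rintro _ ⟨⟨g, rfl⟩, h1, h2⟩
      exact ⟨g, ⟨(hXM g).2 h1, h2⟩, rfl⟩
    have hinj : Function.Injective (fun g : Kˣ × Kˣ => ![(g.1 : K), (g.2 : K)]) := by
      intro g g' hgg
      have h0 := congrFun hgg 0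
      have h1 := congrFun hgg 1
      simp at h0 h1
      exact Prod.ext (Units.ext h0) (Units.ext h1)
    obtain ⟨c, hcf⟩ := eq_const_of_infinite f h hf hs (by
      refine (hinf2.image hinj.injOn).mono ?_
      rintro _ ⟨g, ⟨hg, hg'⟩, rfl⟩
      refine ⟨?_, ?_⟩
      · rw [hX] at hg; exact hg
      · rw [eval_monoMap f.support i0 h hs]
        simp only [hc]
        rw [show ∑ i, b i * ((monoMap f.support i0 g i : Kˣ) : K) = 0 from hg', mul_zero])
    have h1 : c = 0 := by
      have := hc ⟨i0, hi0⟩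
      rw [hb, hcf, MvPolynomial.coeff_C_mul, mul_eq_zero] at this
      exact this.resolve_right (hcoef ⟨i0, hi0⟩)
    funext i
    rw [← hc i, hcf, h1]
    simp
  let A : Subgroup Kˣ := Subgroup.closure (Set.range a) ⊔
    ⨆ i : f.support, (Γ.map M).map (Pi.evalMonoidHom (fun _ => Kˣ) i)
  have hA : A.FG := by
    refine Subgroup.FG.sup ?_ ?_
    · exact (Subgroup.fg_iff _).2 ⟨_, rfl, Set.finite_range _⟩
    · exact Subgroup.FG.iSup _ fun i => subgroup_fg_map _ _ (subgroup_fg_map _ _ hΓ)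
  obtain ⟨L, B, hB, hAB, hBL, hsat⟩ := exists_sat hp A hA
  obtain ⟨k, hk, Es, hEs, hEsH, heq⟩ := core1 hp (⟨i0, hi0⟩ : f.support) M.range
    (by rintro _ ⟨g, rfl⟩; exact hM0 g) hdiv a ha0 hP L B hB hBL hsat
    (fun i => hAB (Subgroup.mem_sup_left (Subgroup.subset_closure ⟨i, rfl⟩)))
  have hMΓ : ∀ g ∈ Γ, M g ∈ coordSub M.range B := by
    intro g hg
    refine (mem_coordSub _ _ _).2 ⟨⟨g, rfl⟩, fun i => hAB (Subgroup.mem_sup_right ?_)⟩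
    exact Subgroup.mem_iSup_of_mem i ⟨M g, ⟨g, hg, rfl⟩, rfl⟩
  have hker : {g | M g = 1}.Finite := by
    refine hstab.subset ?_
    intro g hg
    have hg : M g = 1 := hg
    ext x
    constructor
    · rintro ⟨y, hy, rfl⟩
      rw [hXM] at hy ⊢
      simpa [hg] using hy
    · intro hx
      refine ⟨g⁻¹ * x, ?_, by simp⟩
      rw [hXM] at hx ⊢
      simpa [hg] using hx
  have hlift : ∀ x ∈ Es, ∃ α : (Kˣ × Kˣ) × (Kˣ × Kˣ), M α.1 = x.1 ∧ M α.2 = x.2 := by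
    intro x hx
    obtain ⟨⟨g1, h1⟩, ⟨g2, h2⟩⟩ := hEsH x hx
    exact ⟨(g1, g2), h1, h2⟩
  choose! α hα1 hα2 using hlift
  have hfinal : X ∩ (Γ : Set (Kˣ × Kˣ)) = ⋃ y ∈ Es ×ˢ {g | M g = 1},
      {g | g ∈ Γ ∧ ∃ n : ℕ, g = (y.2 * (α y.1).1) * (α y.1).2 ^ ((p ^ k) ^ n)} := by
    ext g
    simp only [Set.mem_iUnion, Set.mem_inter_iff, SetLike.mem_coe, Set.mem_prod,
      Set.mem_ofPred_eq]
    constructor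
    · rintro ⟨hgX, hgΓ⟩
      have : M g ∈ {z | z ∈ coordSub M.range B ∧ ∑ i, (a i : K) * (z i : K) = 0} :=
        ⟨hMΓ g hgΓ, (hXM g).1 hgX⟩
      rw [heq] at this
      obtain ⟨x, hx, n, hn⟩ := this
      refine ⟨(x, g / ((α x).1 * (α x).2 ^ ((p ^ k) ^ n))), ⟨hx, ?_⟩, hgΓ, n, ?_⟩
      · rw [map_div, map_mul, map_pow, hα1 x hx, hα2 x hx, hn, div_self']
      · rw [mul_assoc, div_mul_cancel]
    · rintro ⟨⟨x, ζ⟩, ⟨hx, hζ⟩, hgΓ, n, hn⟩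
      refine ⟨(hXM g).2 ?_, hgΓ⟩
      have : M g ∈ {z | ∃ x ∈ Es, ∃ n : ℕ, z = x.1 * x.2 ^ ((p ^ k) ^ n)} := by
        refine ⟨x, hx, n, ?_⟩
        rw [hn, map_mul, map_mul, map_pow, hα1 x hx, hα2 x hx, hζ, one_mul]
      rw [← heq] at this
      exact this.2
  rw [hfinal]
  exact IsFU.biUnion (hEs.prod hker) _ fun y _ => isFU_orbit Γ _ _ k hk
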